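/- For every biquadratic polynomial Q(x,y) over ℚ, the Eisenstein E-invariants of its two partial discriminants coincide: E(Δ₁) = E(Δ₂). -/

import Mathlib

open Polynomial

/-- The Eisenstein `E`-invariant of a quartic polynomial
`f = a x⁴ + 4b x³ + 6c x² + 4d x + e`, i.e.
`E(f) = a d² + b² e − a c e − 2 b c d + c³`, expressed via the raw coefficients of `f`
(`a = f.coeff 4`, `b = f.coeff 3 / 4`, `c = f.coeff 2 / 6`, `d = f.coeff 1 / 4`,
`e = f.coeff 0`). -/
noncomputable def eisensteinE (f : Polynomial ℚ) : ℚ :=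
  f.coeff 4 * (f.coeff 1 / 4) ^ 2 + (f.coeff 3 / 4) ^ 2 * f.coeff 0 -
    f.coeff 4 * (f.coeff 2 / 6) * f.coeff 0 -
    2 * (f.coeff 3 / 4) * (f.coeff 2 / 6) * (f.coeff 1 / 4) + (f.coeff 2 / 6) ^ 3

/-!
Let `J` be the Gram matrix of the discriminant form `b² - 4ac`, and let `v = (1, t, t²)`. Then
`vᵀ (q J qᵀ) v` is `Δ₂(t)` and `vᵀ (qᵀ J q) v` is `Δ₁(t)`. A quartic is `vᵀ M v` for many symmetric
`M`, all differing by multiples of `J⁻¹`; exactly one of them, `H`, makes `H J` traceless, and `E`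
equals `det (H J) / 16` because `H` is a rescaled Hankel matrix of the normalized coefficients. As
`H J = M J - tr (M J) / 3`, the invariant `E (vᵀ M v)` depends only on the characteristic polynomial
of `M J`. For the two partial discriminants these matrices are `(q J) (qᵀ J)` and `(qᵀ J) (q J)`,
which have the same characteristic polynomial.
-/

open Matrix

section GramPolynomial

variable {R : Type*} [CommSemiring R] {n : ℕ}

variable (R n) in
/-- The vector of monomials `(1, X, …, X ^ (n - 1))`. -/
noncomputable def monomialVec : Fin n → R[X] :=
  fun i ↦ X ^ (i : ℕ)

/-- The polynomial `vᵀ M v`, where `v` is the vector of monomials: the restriction to the moment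
curve of the quadratic form with Gram matrix `M`. -/
noncomputable def gramPolynomial (M : Matrix (Fin n) (Fin n) R) : R[X] :=
  monomialVec R n ⬝ᵥ (M.map C *ᵥ monomialVec R n)

/-- The polynomial whose coefficients are the entries of column `j` of `q`. -/
noncomputable def columnPolynomial {ι : Type*} (q : Matrix (Fin n) ι R) (j : ι) : R[X] :=
  ∑ i : Fin n, C (q i j) * X ^ (i : ℕ)

lemma coeff_gramPolynomial (M : Matrix (Fin n) (Fin n) R) (k : ℕ) :
    (gramPolynomial M).coeff k = ∑ i : Fin n, ∑ j : Fin n, if k = i + j then M i j else 0 := by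
  simp only [gramPolynomial, monomialVec, dotProduct, mulVec, map_apply, Finset.mul_sum,
    finsetSum_coeff, mul_left_comm _ (C _), ← pow_add, coeff_C_mul_X_pow]

lemma gramPolynomial_mul_mul_transpose {ι : Type*} [Fintype ι] (q : Matrix (Fin n) ι R)
    (S : Matrix ι ι R) :
    gramPolynomial (q * S * qᵀ) = columnPolynomial q ⬝ᵥ (S.map C *ᵥ columnPolynomial q) := by
  have columnPolynomial_eq : columnPolynomial q = (q.map C)ᵀ *ᵥ monomialVec R n := rfl
  rw [gramPolynomial, Matrix.map_mul, Matrix.map_mul, ← mulVec_mulVec, ← mulVec_mulVec,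
    dotProduct_mulVec, ← mulVec_transpose, transpose_map, ← columnPolynomial_eq]

end GramPolynomial

section Discriminant

variable {R : Type*} [CommRing R]

variable (R) in
/-- The Gram matrix of the discriminant `b² - 4ac`, as a quadratic form in the coefficient vector
`(c, b, a)` of `a X² + b X + c`. -/
def discrimGram : Matrix (Fin 3) (Fin 3) R :=
  !![0, 0, -2; 0, 1, 0; -2, 0, 0]

/-- The discriminant `Δ₂(x)` with respect to `y` of the biquadratic polynomial
`∑ q i j x ^ i y ^ j`; `Δ₁(y)` is obtained by transposing `q`. -/
noncomputable def partialDiscriminant (q : Matrix (Fin 3) (Fin 3) R) : R[X] :=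
  discrim (columnPolynomial q 2) (columnPolynomial q 1) (columnPolynomial q 0)

lemma isSymm_discrimGram : (discrimGram R).IsSymm := by
  ext i j
  fin_cases i <;> fin_cases j <;> rfl

lemma discrimGram_map {S : Type*} [CommRing S] (f : R →+* S) :
    (discrimGram R).map f = discrimGram S := by
  ext i j
  fin_cases i <;> fin_cases j <;> simp [discrimGram, map_ofNat f 2]

lemma dotProduct_discrimGram_mulVec (w : Fin 3 → R) :
    w ⬝ᵥ (discrimGram R *ᵥ w) = discrim (w 2) (w 1) (w 0) := by
  simp only [discrimGram, discrim, dotProduct, mulVec, Fin.sum_univ_three, of_apply, cons_val]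
  ring

lemma partialDiscriminant_eq_gramPolynomial (q : Matrix (Fin 3) (Fin 3) R) :
    partialDiscriminant q = gramPolynomial (q * discrimGram R * qᵀ) := by
  rw [gramPolynomial_mul_mul_transpose, discrimGram_map, dotProduct_discrimGram_mulVec,
    partialDiscriminant]

end Discriminant

section TracelessGram

variable {K : Type*} [Field K]

/-- The symmetric matrix `H` with `vᵀ H v = f`, for a quartic `f` and `v = (1, X, X²)`, normalized
by `tr (H * discrimGram K) = 0`. For `f = a X⁴ + 4b X³ + 6c X² + 4d X + e` it is
`!![e, 2d, c; 2d, 4c, 2b; c, 2b, a]`. -/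
def tracelessGram (f : K[X]) : Matrix (Fin 3) (Fin 3) K :=
  !![f.coeff 0, f.coeff 1 / 2, f.coeff 2 / 6;
    f.coeff 1 / 2, 2 * f.coeff 2 / 3, f.coeff 3 / 2;
    f.coeff 2 / 6, f.coeff 3 / 2, f.coeff 4]

lemma tracelessGram_gramPolynomial_mul_discrimGram (h2 : (2 : K) ≠ 0) (h3 : (3 : K) ≠ 0)
    {M : Matrix (Fin 3) (Fin 3) K} (hM : M.IsSymm) :
    tracelessGram (gramPolynomial M) * discrimGram K =
      M * discrimGram K - scalar (Fin 3) ((M * discrimGram K).trace / 3) := by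
  have h6 : (6 : K) ≠ 0 := by
    convert mul_ne_zero h2 h3 using 1
    norm_num
  have symm₁₀ := hM.apply 0 1
  have symm₂₀ := hM.apply 0 2
  have symm₂₁ := hM.apply 1 2
  ext i j
  fin_cases i <;> fin_cases j <;>
    simp [tracelessGram, discrimGram, coeff_gramPolynomial, Fin.sum_univ_three, trace_fin_three,
      mul_apply, symm₁₀, symm₂₀, symm₂₁, -mul_eq_mul_left_iff, -mul_eq_mul_right_iff] <;>
    field_simp <;> ring

lemma eisensteinE_eq_det (f : ℚ[X]) :
    eisensteinE f = (tracelessGram f * discrimGram ℚ).det / 16 := by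
  simp only [eisensteinE, tracelessGram, discrimGram, det_mul, det_fin_three, of_apply, cons_val]
  ring

lemma eisensteinE_gramPolynomial {M : Matrix (Fin 3) (Fin 3) ℚ} (hM : M.IsSymm) :
    eisensteinE (gramPolynomial M) =
      -(M * discrimGram ℚ).charpoly.eval ((M * discrimGram ℚ).trace / 3) / 16 := by
  rw [eisensteinE_eq_det,
    tracelessGram_gramPolynomial_mul_discrimGram two_ne_zero three_ne_zero hM, eval_charpoly,
    ← neg_sub, det_neg, Fintype.card_fin, Odd.neg_one_pow (by decide), neg_one_mul]

lemma eisensteinE_partialDiscriminant (q : Matrix (Fin 3) (Fin 3) ℚ) :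
    eisensteinE (partialDiscriminant q) =
      -((q * discrimGram ℚ) * (qᵀ * discrimGram ℚ)).charpoly.eval
        (((q * discrimGram ℚ) * (qᵀ * discrimGram ℚ)).trace / 3) / 16 := by
  have isSymm_gram : (q * discrimGram ℚ * qᵀ).IsSymm := by
    rw [IsSymm, transpose_mul, transpose_mul, transpose_transpose, isSymm_discrimGram.eq,
      Matrix.mul_assoc]
  rw [partialDiscriminant_eq_gramPolynomial, eisensteinE_gramPolynomial isSymm_gram,
    Matrix.mul_assoc (q * discrimGram ℚ)]

end TracelessGram

/-- For a biquadratic polynomial `Q(x,y) = Σ_{0 ≤ i,j ≤ 2} q i j * x^i * y^j` over `ℚ`,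
the Eisenstein `E`-invariants of its two partial discriminants
`Δ₁(y) = b̃(y)² − 4 ã(y) c̃(y)` and `Δ₂(x) = b(x)² − 4 a(x) c(x)` coincide. -/
theorem eisensteinE_partialDiscriminant_eq (q : Fin 3 → Fin 3 → ℚ) :
    eisensteinE ((∑ j : Fin 3, C (q 1 j) * X ^ (j : ℕ)) ^ 2 -
        4 * (∑ j : Fin 3, C (q 2 j) * X ^ (j : ℕ)) * (∑ j : Fin 3, C (q 0 j) * X ^ (j : ℕ))) =
      eisensteinE ((∑ i : Fin 3, C (q i 1) * X ^ (i : ℕ)) ^ 2 -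
        4 * (∑ i : Fin 3, C (q i 2) * X ^ (i : ℕ)) * (∑ i : Fin 3, C (q i 0) * X ^ (i : ℕ))) := by
  change eisensteinE (partialDiscriminant (of q)ᵀ) = eisensteinE (partialDiscriminant (of q))
  rw [eisensteinE_partialDiscriminant, eisensteinE_partialDiscriminant, transpose_transpose,
    charpoly_mul_comm, trace_mul_comm]
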